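/- Let n ≥ 2 and let φ₁, φ₂ : ⟨DS_n⟩ → ⟨DS_n⟩ be maps. The following are equivalent: (1) tr(φ₁(A₁) φ₂(A₂)) = tr(A₁ A₂) for all A₁, A₂ ∈ ⟨DS_n⟩, and there exists p ∈ {1, 2} such that every A ∈ ⟨DS_n⟩ with rank(A) ≤ 1 satisfies rank(φ_p(A)) ≤ 1; (2) φ₁(A₁) φ₂(A₂) and A₁ A₂ have the same characteristic polynomial for all A₁, A₂ ∈ ⟨DS_n⟩; (3) either n = 2 and there exist an invertible C ∈ ⟨DS_2⟩ and P ∈ {I₂, diag(1, −1)} with φ₁(A) = C P A P⁻¹ and φ₂(A) = P A P⁻¹ C⁻¹ for all A ∈ ⟨DS_2⟩, or n ≥ 3 and there exist invertible matrices P, Q ∈ ⟨DS_n⟩ such that either (φ₁(A) = P A Q⁻¹ and φ₂(A) = Q A P⁻¹ for all A ∈ ⟨DS_n⟩) or (φ₁(A) = P Aᵀ Q⁻¹ and φ₂(A) = Q Aᵀ P⁻¹ for all A ∈ ⟨DS_n⟩). -/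

import Mathlib

/-!
The trace form is nondegenerate on `⟨DS_n⟩`, so a pair of maps preserving `tr (A₁ A₂)` consists of
linear bijections (`exists_linear_extension`), and the first map determines the second
(`eq_of_trace_dual`).

`⟨DS_n⟩` is the commutant of the averaging projection `E`, that is, an algebra `ℝ E ⊕ M_{n-1}(ℝ)`
in block form. Its matrices of rank at most one are the multiples of `E` and those of the second
block (`rankOne_cases`). For `n ≥ 3` a linear bijection not increasing rank one preserves both
blocks, as the second block contains spaces `x ⊗ ℝ^{n-1}` of dimension at least two consisting of
matrices of rank at most one, and the first block does not. On the second block the map is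
`X ↦ P X Q` or `X ↦ P Xᵀ Q` by the rank-one preserver theorem (`rankOne_preserver`), so altogether
it is `A ↦ L A R` or `A ↦ L Aᵀ R` with `L, R ∈ ⟨DS_n⟩` (`rankOne_preserver_spanDS`). For `n = 2` both
blocks are one-dimensional and may be exchanged, which is conjugation by `diag(1, -1)`
(`rankOne_preserver_two`). So the trace and rank conditions give the standard form, from which
equality of characteristic polynomials is a computation: the products are similar to `A₁ A₂` or to
the transpose of `A₂ A₁`. As the latter condition is symmetric in the two maps, it also follows when
the rank condition is imposed on the second map.

Conversely, if the characteristic polynomials agree, so do the traces, and both maps are again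
linear bijections. For `A` of rank at most one, pick `G` in `⟨DS_n⟩` with `φ₁(A) G φ₁(A) = φ₁(A)` and
write `G = φ₂(B)`. The idempotent `φ₁(A) φ₂(B)` has the spectrum of `A B`, hence at most one nonzero
eigenvalue, hence rank at most one; and `φ₁(A)` has the same rank (`trace_rank_of_charpoly`).
-/

open Matrix

/-- Membership in `⟨DS_n⟩`: `∃ c, A e = c e ∧ Aᵀ e = c e`, where `e` is the all-ones vector. -/
def InSpanDS {n : ℕ} (A : Matrix (Fin n) (Fin n) ℝ) : Prop :=
  ∃ c : ℝ, A *ᵥ (fun _ => (1:ℝ)) = c • (fun _ => (1:ℝ)) ∧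
    Aᵀ *ᵥ (fun _ => (1:ℝ)) = c • (fun _ => (1:ℝ))

/-- Membership in `⟨RS_n⟩`: `∃ c, A e = c e`. -/
def InSpanRS {n : ℕ} (A : Matrix (Fin n) (Fin n) ℝ) : Prop :=
  ∃ c : ℝ, A *ᵥ (fun _ => (1:ℝ)) = c • (fun _ => (1:ℝ))

/-- Membership in `R_n = {e vᵀ : vᵀ e = 0}`. -/
def InRn {n : ℕ} (A : Matrix (Fin n) (Fin n) ℝ) : Prop :=
  ∃ v : Fin n → ℝ, (∑ i, v i) = 0 ∧ A = vecMulVec (fun _ => (1:ℝ)) v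

/-- Membership in `C_n = {v eᵀ : vᵀ e = 0}`. -/
def InCn {n : ℕ} (A : Matrix (Fin n) (Fin n) ℝ) : Prop :=
  ∃ v : Fin n → ℝ, (∑ i, v i) = 0 ∧ A = vecMulVec v (fun _ => (1:ℝ))

/-- `A` is doubly stochastic. -/
def IsDS {n : ℕ} (A : Matrix (Fin n) (Fin n) ℝ) : Prop :=
  (∀ i j, 0 ≤ A i j) ∧ (∀ i, ∑ j, A i j = 1) ∧ (∀ j, ∑ i, A i j = 1)

/-- `A` is row stochastic. -/
def IsRS {n : ℕ} (A : Matrix (Fin n) (Fin n) ℝ) : Prop :=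
  (∀ i j, 0 ≤ A i j) ∧ (∀ i, ∑ j, A i j = 1)

/-- `A` is column stochastic. -/
def IsCS {n : ℕ} (A : Matrix (Fin n) (Fin n) ℝ) : Prop :=
  (∀ i j, 0 ≤ A i j) ∧ (∀ j, ∑ i, A i j = 1)

/-- `A` is a permutation matrix. -/
def IsPerm {n : ℕ} (A : Matrix (Fin n) (Fin n) ℝ) : Prop :=
  ∃ σ : Equiv.Perm (Fin n), A = σ.permMatrix ℝ

/-- `s_A = (Σ_{i,j} a_{ij})/n²`. -/
noncomputable def sAvg {n : ℕ} (A : Matrix (Fin n) (Fin n) ℝ) : ℝ :=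
  (∑ i, ∑ j, A i j) / (n ^ 2 : ℝ)

/-- `r(A)` with `i`-th entry `(Σ_k a_{ki})/n − s_A`. -/
noncomputable def rVec {n : ℕ} (A : Matrix (Fin n) (Fin n) ℝ) : Fin n → ℝ :=
  fun i => (∑ k, A k i) / (n : ℝ) - sAvg A

/-- `c(A)` with `i`-th entry `(Σ_k a_{ik})/n − s_A`. -/
noncomputable def cVec {n : ℕ} (A : Matrix (Fin n) (Fin n) ℝ) : Fin n → ℝ :=
  fun i => (∑ k, A i k) / (n : ℝ) - sAvg A

/-- `A_R = e · r(A)ᵀ`. -/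
noncomputable def partR {n : ℕ} (A : Matrix (Fin n) (Fin n) ℝ) : Matrix (Fin n) (Fin n) ℝ :=
  vecMulVec (fun _ => (1:ℝ)) (rVec A)

/-- `A_C = c(A) · eᵀ`. -/
noncomputable def partC {n : ℕ} (A : Matrix (Fin n) (Fin n) ℝ) : Matrix (Fin n) (Fin n) ℝ :=
  vecMulVec (cVec A) (fun _ => (1:ℝ))

/-- `A_DS = A − A_R − A_C`. -/
noncomputable def partDS {n : ℕ} (A : Matrix (Fin n) (Fin n) ℝ) : Matrix (Fin n) (Fin n) ℝ :=
  A - partR A - partC A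

/-! ### Rank-one preservers on square matrices -/

/-- If `u wᵀ + u' w'ᵀ` has rank at most one, then `u'` is parallel to `u` or `w'` to `w`: all `2 × 2`
minors of the sum vanish, and each factors as a minor of `(u, u')` times a minor of `(w, w')`. -/
lemma parallel_of_add_rankOne {ι κ : Type*} {u u' p : ι → ℝ} {w w' q : κ → ℝ}
    (h : vecMulVec u w + vecMulVec u' w' = vecMulVec p q) (hu : u ≠ 0) (hw : w ≠ 0) :
    (∃ c : ℝ, u' = c • u) ∨ ∃ c : ℝ, w' = c • w := by
  obtain ⟨i, hi⟩ := Function.ne_iff.mp hu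
  obtain ⟨j, hj⟩ := Function.ne_iff.mp hw
  simp only [Pi.zero_apply] at hi hj
  have key : ∀ k l, (u i * u' k - u' i * u k) * (w j * w' l - w' j * w l) = 0 := by
    intro k l
    have e : ∀ a b, u a * w b + u' a * w' b = p a * q b := fun a b => by
      simpa [vecMulVec_apply] using congrFun (congrFun h a) b
    have h1 := e i j
    have h2 := e k l
    have h3 := e i l
    have h4 := e k j
    have : (u i * w j + u' i * w' j) * (u k * w l + u' k * w' l)
        = (u i * w l + u' i * w' l) * (u k * w j + u' k * w' j) := by
      rw [h1, h2, h3, h4]; ring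
    linear_combination this
  by_cases hk : ∀ k, u i * u' k - u' i * u k = 0
  · left
    refine ⟨u' i / u i, funext fun k => ?_⟩
    have := hk k
    simp only [Pi.smul_apply, smul_eq_mul]
    field_simp
    linear_combination this
  · right
    push Not at hk
    obtain ⟨k, hk⟩ := hk
    refine ⟨w' j / w j, funext fun l => ?_⟩
    have := (mul_eq_zero.mp (key k l)).resolve_left hk
    simp only [Pi.smul_apply, smul_eq_mul]
    field_simp
    linear_combination this

lemma vecMulVec_left_linear {ι κ V : Type*} [AddCommGroup V] [Module ℝ V]
    (L : V →ₗ[ℝ] Matrix ι κ ℝ) {w : κ → ℝ} (hw : w ≠ 0)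
    (h : ∀ y, ∃ p, L y = vecMulVec p w) :
    ∃ p : V →ₗ[ℝ] (ι → ℝ), ∀ y, L y = vecMulVec (p y) w := by
  obtain ⟨j, hj⟩ := Function.ne_iff.mp hw
  simp only [Pi.zero_apply] at hj
  refine ⟨{ toFun := fun y i => L y i j / w j, map_add' := ?_, map_smul' := ?_ }, ?_⟩
  · intro x y; ext i; simp [add_div]
  · intro c y; ext i; simp [mul_div_assoc]
  · intro y
    obtain ⟨p, hp⟩ := h y
    ext a b
    simp only [LinearMap.coe_mk, AddHom.coe_mk, vecMulVec_apply, hp]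
    field_simp

lemma vecMulVec_right_linear {ι κ V : Type*} [AddCommGroup V] [Module ℝ V]
    (L : V →ₗ[ℝ] Matrix ι κ ℝ) {u : ι → ℝ} (hu : u ≠ 0)
    (h : ∀ y, ∃ q, L y = vecMulVec u q) :
    ∃ q : V →ₗ[ℝ] (κ → ℝ), ∀ y, L y = vecMulVec u (q y) := by
  obtain ⟨j, hj⟩ := Function.ne_iff.mp hu
  simp only [Pi.zero_apply] at hj
  refine ⟨{ toFun := fun y i => L y j i / u j, map_add' := ?_, map_smul' := ?_ }, ?_⟩
  · intro x y; ext i; simp [add_div]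
  · intro c y; ext i; simp [mul_div_assoc]
  · intro y
    obtain ⟨p, hp⟩ := h y
    ext a b
    simp only [LinearMap.coe_mk, AddHom.coe_mk, vecMulVec_apply, hp]
    field_simp

/-- A linear space of matrices of rank at most one has a common column space or a common row
space. -/
lemma rankOne_space {ι κ V : Type*} [AddCommGroup V] [Module ℝ V]
    (L : V →ₗ[ℝ] Matrix ι κ ℝ) (hL : ∀ y, ∃ p q, L y = vecMulVec p q)
    {y₀ : V} {u : ι → ℝ} {w : κ → ℝ} (h0 : L y₀ = vecMulVec u w) (hu : u ≠ 0) (hw : w ≠ 0) :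
    (∃ p : V →ₗ[ℝ] (ι → ℝ), ∀ y, L y = vecMulVec (p y) w) ∨
      ∃ q : V →ₗ[ℝ] (κ → ℝ), ∀ y, L y = vecMulVec u (q y) := by
  have key : ∀ y, (∃ p, L y = vecMulVec p w) ∨ (∃ q, L y = vecMulVec u q) := by
    intro y
    obtain ⟨p, q, hpq⟩ := hL y
    obtain ⟨a, b, hab⟩ := hL (y₀ + y)
    rw [map_add, h0, hpq] at hab
    rcases parallel_of_add_rankOne hab hu hw with ⟨c, rfl⟩ | ⟨c, rfl⟩
    · exact Or.inr ⟨c • q, by rw [hpq, smul_vecMulVec, vecMulVec_smul]⟩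
    · exact Or.inl ⟨c • p, by rw [hpq, smul_vecMulVec, vecMulVec_smul]⟩
  by_cases h1 : ∀ y, ∃ p, L y = vecMulVec p w
  · exact Or.inl (vecMulVec_left_linear L hw h1)
  by_cases h2 : ∀ y, ∃ q, L y = vecMulVec u q
  · exact Or.inr (vecMulVec_right_linear L hu h2)
  -- a vector space is not the union of two proper subspaces
  exfalso
  push Not at h1 h2
  obtain ⟨y, hy⟩ := h1
  obtain ⟨z, hz⟩ := h2
  obtain ⟨q, hq⟩ := (key y).resolve_left (fun ⟨p, hp⟩ => hy p hp)
  obtain ⟨p, hp⟩ := (key z).resolve_right (fun ⟨p, hp⟩ => hz p hp)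
  rcases key (y + z) with ⟨r, hr⟩ | ⟨r, hr⟩
  · refine hy (r - p) ?_
    rw [sub_vecMulVec, ← hr, map_add, hp]; abel
  · refine hz (r - q) ?_
    rw [vecMulVec_sub, ← hr, map_add, hq]; abel

/-- `x ↦ x yᵀ` as a linear map. -/
def tensorLeft {ι κ : Type*} (y : κ → ℝ) : (ι → ℝ) →ₗ[ℝ] Matrix ι κ ℝ where
  toFun x := vecMulVec x y
  map_add' a b := add_vecMulVec a b y
  map_smul' c a := smul_vecMulVec c a y

/-- `y ↦ x yᵀ` as a linear map. -/
def tensorRight {ι κ : Type*} (x : ι → ℝ) : (κ → ℝ) →ₗ[ℝ] Matrix ι κ ℝ where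
  toFun y := vecMulVec x y
  map_add' a b := vecMulVec_add x a b
  map_smul' c a := vecMulVec_smul c x a

/-- The column space of `x yᵀ`, for `y ≠ 0`, is spanned by `x`. -/
lemma parallel_of_vecMulVec_eq {ι κ : Type*} {x x' : ι → ℝ} {y y' : κ → ℝ}
    (h : vecMulVec x y = vecMulVec x' y') (hy : y ≠ 0) : ∃ c : ℝ, x = c • x' := by
  obtain ⟨j, hj⟩ := Function.ne_iff.mp hy
  simp only [Pi.zero_apply] at hj
  refine ⟨y' j / y j, funext fun k => ?_⟩
  have := congrFun (congrFun h k) j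
  simp only [vecMulVec_apply, Pi.smul_apply, smul_eq_mul] at this ⊢
  field_simp
  linear_combination this

lemma exists_not_parallel {ι : Type*} [Nontrivial ι] (x : ι → ℝ) :
    ∃ y : ι → ℝ, ∀ c : ℝ, y ≠ c • x := by
  classical
  obtain ⟨i, j, hij⟩ := exists_pair_ne ι
  by_cases hx : x i = 0
  · refine ⟨Pi.single i 1, fun c h => ?_⟩
    have := congrFun h i
    simp [hx] at this
  · refine ⟨Pi.single j 1, fun c h => ?_⟩
    have h1 := congrFun h i
    have h2 := congrFun h j
    simp only [Pi.single_apply, if_neg hij, Pi.smul_apply, smul_eq_mul, if_true] at h1 h2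
    have : c = 0 := by simpa [hx] using h1.symm
    simp [this] at h2

/-- The column-type case of the rank-one preserver theorem: once `T` keeps the left factor of
`x₀ yᵀ` and the right factor of `x y₀ᵀ` fixed, it acts on `x yᵀ` factor by factor. -/
lemma rankOne_factor {ι : Type*}
    (T : Matrix ι ι ℝ →ₗ[ℝ] Matrix ι ι ℝ) (hT : Function.Injective T)
    (hr : ∀ x y, ∃ p q, T (vecMulVec x y) = vecMulVec p q)
    {x₀ y₀ u w : ι → ℝ} (hu : u ≠ 0) (hw : w ≠ 0)
    (h0 : T (vecMulVec x₀ y₀) = vecMulVec u w)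
    (p q : (ι → ℝ) →ₗ[ℝ] (ι → ℝ)) (hp : ∀ x, T (vecMulVec x y₀) = vecMulVec (p x) w)
    (hq : ∀ y, T (vecMulVec x₀ y) = vecMulVec u (q y)) (x y : ι → ℝ) :
    T (vecMulVec x y) = vecMulVec (p x) (q y) := by
  have hcancelL : ∀ a b : ι → ℝ, vecMulVec a w = vecMulVec b w → a = b := by
    intro a b h
    have : vecMulVec (a - b) w = 0 := by rw [sub_vecMulVec, h, sub_self]
    exact sub_eq_zero.mp ((vecMulVec_eq_zero.mp this).resolve_right hw)
  have hcancelR : ∀ a b : ι → ℝ, vecMulVec u a = vecMulVec u b → a = b := by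
    intro a b h
    have : vecMulVec u (a - b) = 0 := by rw [vecMulVec_sub, h, sub_self]
    exact sub_eq_zero.mp ((vecMulVec_eq_zero.mp this).resolve_left hu)
  have hpx0 : p x₀ = u := hcancelL _ _ (by rw [← hp, h0])
  have hqy0 : q y₀ = w := hcancelR _ _ (by rw [← hq, h0])
  have hne : vecMulVec x₀ y₀ ≠ 0 := fun h => by
    rw [h, map_zero] at h0
    exact vecMulVec_ne_zero hu hw h0.symm
  have hx0 : x₀ ≠ 0 := fun h => hne (by simp [h])
  have hy0 : y₀ ≠ 0 := fun h => hne (by simp [h])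
  by_cases hx : ∃ c : ℝ, x = c • x₀
  · obtain ⟨c, rfl⟩ := hx
    rw [smul_vecMulVec, map_smul, hq, map_smul, hpx0, smul_vecMulVec]
  by_cases hy : ∃ c : ℝ, y = c • y₀
  · obtain ⟨c, rfl⟩ := hy
    rw [vecMulVec_smul, map_smul, hp, map_smul, hqy0, vecMulVec_smul]
  -- in the generic position, neither `p x ∥ u` nor `q y ∥ w`
  have hpx : ∀ c : ℝ, u ≠ c • p x := by
    intro c h
    apply hx
    have hc : c ≠ 0 := by rintro rfl; exact hu (by simpa using h)
    have : T (vecMulVec (x₀ - c • x) y₀) = 0 := by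
      rw [hp, map_sub, map_smul, hpx0, ← h, sub_self, zero_vecMulVec]
    have h2 := (vecMulVec_eq_zero.mp (hT (by rw [this, map_zero]))).resolve_right hy0
    refine ⟨c⁻¹, ?_⟩
    rw [sub_eq_zero.mp h2, smul_smul, inv_mul_cancel₀ hc, one_smul]
  have hqy : ∀ c : ℝ, w ≠ c • q y := by
    intro c h
    apply hy
    have hc : c ≠ 0 := by rintro rfl; exact hw (by simpa using h)
    have : T (vecMulVec x₀ (y₀ - c • y)) = 0 := by
      rw [hq, map_sub, map_smul, hqy0, ← h, sub_self, vecMulVec_zero]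
    have h2 := (vecMulVec_eq_zero.mp (hT (by rw [this, map_zero]))).resolve_left hx0
    refine ⟨c⁻¹, ?_⟩
    rw [sub_eq_zero.mp h2, smul_smul, inv_mul_cancel₀ hc, one_smul]
  have hp0 : p x ≠ 0 := by
    intro h
    have : T (vecMulVec x y₀) = 0 := by rw [hp, h, zero_vecMulVec]
    have h2 := (vecMulVec_eq_zero.mp (hT (by rw [this, map_zero]))).resolve_right hy0
    exact hx ⟨0, by simpa using h2⟩
  have hq0 : q y ≠ 0 := by
    intro h
    have : T (vecMulVec x₀ y) = 0 := by rw [hq, h, vecMulVec_zero]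
    have h2 := (vecMulVec_eq_zero.mp (hT (by rw [this, map_zero]))).resolve_left hx0
    exact hy ⟨0, by simpa using h2⟩
  obtain ⟨r, s, hrs⟩ := hr x y
  -- `x (y₀ + y)ᵀ` and `(x₀ + x) yᵀ` pin down the directions of `r` and `s`
  have h1 : (∃ c : ℝ, r = c • p x) ∨ ∃ c : ℝ, s = c • w := by
    obtain ⟨a, b, hab⟩ := hr x (y₀ + y)
    rw [vecMulVec_add, map_add, hp, hrs] at hab
    exact parallel_of_add_rankOne hab hp0 hw
  have h2 : (∃ c : ℝ, r = c • u) ∨ ∃ c : ℝ, s = c • q y := by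
    obtain ⟨a, b, hab⟩ := hr (x₀ + x) y
    rw [add_vecMulVec, map_add, hq, hrs] at hab
    exact parallel_of_add_rankOne hab hu hq0
  have hxy : vecMulVec x y ≠ 0 :=
    vecMulVec_ne_zero (fun h => hx ⟨0, by simpa using h⟩) (fun h => hy ⟨0, by simpa using h⟩)
  have hTxy : T (vecMulVec x y) ≠ 0 := fun h => hxy (hT (by rw [h, map_zero]))
  have hr0 : r ≠ 0 := fun h => hTxy (by rw [hrs, h, zero_vecMulVec])
  have hs0 : s ≠ 0 := fun h => hTxy (by rw [hrs, h, vecMulVec_zero])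
  have hk : ∃ k : ℝ, T (vecMulVec x y) = k • vecMulVec (p x) (q y) := by
    rcases h1 with ⟨c, hc⟩ | ⟨c, hc⟩ <;> rcases h2 with ⟨d, hd⟩ | ⟨d, hd⟩
    · exfalso
      have hd0 : d ≠ 0 := by rintro rfl; exact hr0 (by simpa using hd)
      apply hpx (d⁻¹ * c)
      rw [mul_smul, ← hc, hd, smul_smul, inv_mul_cancel₀ hd0, one_smul]
    · exact ⟨d * c, by rw [hrs, hc, hd, smul_vecMulVec, vecMulVec_smul, smul_smul, mul_comm]⟩
    · exfalso
      have : T (vecMulVec x y) = T (vecMulVec ((d * c) • x₀) y₀) := by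
        rw [hrs, hc, hd, smul_vecMulVec, vecMulVec_smul, smul_vecMulVec, map_smul, h0, smul_smul]
      obtain ⟨k, hk⟩ := parallel_of_vecMulVec_eq (hT this)
        (fun h => hy ⟨0, by simpa using h⟩)
      exact hx ⟨k * (d * c), by rw [hk, smul_smul]⟩
    · exfalso
      have hc0 : c ≠ 0 := by rintro rfl; exact hs0 (by simpa using hc)
      apply hqy (c⁻¹ * d)
      rw [mul_smul, ← hd, hc, smul_smul, inv_mul_cancel₀ hc0, one_smul]
  obtain ⟨k, hk⟩ := hk
  -- `T ((x₀ + x) (y₀ + y)ᵀ) = (u + p x) (w + q y)ᵀ + (k - 1) p x (q y)ᵀ` has rank one, so `k = 1`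
  have h3 : k = 1 := by
    obtain ⟨a, b, hab⟩ := hr (x₀ + x) (y₀ + y)
    have e : vecMulVec (u + p x) (w + q y) + vecMulVec ((k - 1) • p x) (q y) = vecMulVec a b := by
      rw [← hab, smul_vecMulVec]
      simp only [map_add, add_vecMulVec, vecMulVec_add, h0, hq, hp, hk, sub_smul, one_smul]
      abel
    have hup : u + p x ≠ 0 := fun h => hpx (-1) (by
      rw [neg_smul, one_smul]; exact eq_neg_of_add_eq_zero_left h)
    have hwq : w + q y ≠ 0 := fun h => hqy (-1) (by
      rw [neg_smul, one_smul]; exact eq_neg_of_add_eq_zero_left h)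
    rcases parallel_of_add_rankOne e hup hwq with ⟨c, hc⟩ | ⟨c, hc⟩
    · by_cases hc0 : c = 0
      · rw [hc0, zero_smul] at hc
        exact sub_eq_zero.mp ((smul_eq_zero.mp hc).resolve_right hp0)
      · exfalso
        apply hpx (c⁻¹ * (k - 1 - c))
        rw [mul_smul, sub_smul (k - 1) c, hc, smul_add, add_sub_cancel_right, smul_smul,
          inv_mul_cancel₀ hc0, one_smul]
    · by_cases hc0 : c = 0
      · rw [hc0, zero_smul] at hc
        exact absurd hc hq0
      · exfalso
        apply hqy (c⁻¹ * (1 - c))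
        have : (1 - c) • q y = c • w := by
          rw [sub_smul, one_smul, sub_eq_iff_eq_add, ← smul_add, ← hc]
        rw [mul_smul, this, smul_smul, inv_mul_cancel₀ hc0, one_smul]
  rw [hk, h3, one_smul]

/-- Linear maps that agree on rank-one matrices are equal. -/
lemma linearMap_ext_rankOne {ι V : Type*} [Fintype ι] [AddCommGroup V] [Module ℝ V]
    (T S : Matrix ι ι ℝ →ₗ[ℝ] V) (h : ∀ x y, T (vecMulVec x y) = S (vecMulVec x y)) : T = S := by
  classical
  refine LinearMap.ext fun X => ?_
  rw [matrix_eq_sum_single X]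
  simp only [map_sum]
  refine Finset.sum_congr rfl fun i _ => Finset.sum_congr rfl fun j _ => ?_
  have : single i j (X i j) = vecMulVec (Pi.single i (X i j)) (Pi.single j 1) := by
    ext a b
    simp only [single_apply, vecMulVec_apply, Pi.single_apply]
    grind
  rw [this, h]

/-- `T X = P X Q` from its values on rank-one matrices. -/
lemma exists_mul_mul {ι : Type*} [Fintype ι] [DecidableEq ι]
    (T : Matrix ι ι ℝ →ₗ[ℝ] Matrix ι ι ℝ) (p q : (ι → ℝ) →ₗ[ℝ] (ι → ℝ))
    (h : ∀ x y, T (vecMulVec x y) = vecMulVec (p x) (q y)) :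
    ∃ P Q : Matrix ι ι ℝ, ∀ X, T X = P * X * Q := by
  refine ⟨LinearMap.toMatrix' p, (LinearMap.toMatrix' q)ᵀ, fun X => ?_⟩
  have : T = (LinearMap.mulRight ℝ (LinearMap.toMatrix' q)ᵀ) ∘ₗ
      (LinearMap.mulLeft ℝ (LinearMap.toMatrix' p)) := by
    refine linearMap_ext_rankOne _ _ fun x y => ?_
    rw [h, LinearMap.comp_apply, LinearMap.mulLeft_apply, LinearMap.mulRight_apply,
      mul_vecMulVec, vecMulVec_mul, vecMul_transpose, LinearMap.toMatrix'_mulVec,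
      LinearMap.toMatrix'_mulVec]
  rw [this]; rfl

/-- Injective linear maps on square matrices that do not increase rank one are of the form
`X ↦ P X Q` or `X ↦ P Xᵀ Q`. -/
theorem rankOne_preserver {ι : Type*} [Fintype ι] [DecidableEq ι] [Nontrivial ι]
    (T : Matrix ι ι ℝ →ₗ[ℝ] Matrix ι ι ℝ) (hT : Function.Injective T)
    (hr : ∀ x y, ∃ p q, T (vecMulVec x y) = vecMulVec p q) :
    ∃ P Q : Matrix ι ι ℝ, (∀ X, T X = P * X * Q) ∨ (∀ X, T X = P * Xᵀ * Q) := by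
  obtain ⟨x₀, hx0⟩ := exists_ne (0 : ι → ℝ)
  obtain ⟨x₁, hx1⟩ := exists_not_parallel x₀
  have hx1' : x₁ ≠ 0 := fun h => hx1 0 (by simpa using h)
  obtain ⟨u, w, h0⟩ := hr x₀ x₀
  have hne : vecMulVec u w ≠ 0 := by
    rw [← h0]; intro h
    exact vecMulVec_ne_zero hx0 hx0 (hT (by rw [h, map_zero]))
  have hu : u ≠ 0 := fun h => hne (by simp [h])
  have hw : w ≠ 0 := fun h => hne (by simp [h])
  have hR := rankOne_space (T ∘ₗ tensorRight x₀) (fun y => hr x₀ y) (y₀ := x₀) h0 hu hw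
  have hL := rankOne_space (T ∘ₗ tensorLeft x₀) (fun y => hr y x₀) (y₀ := x₀) h0 hu hw
  simp only [LinearMap.comp_apply, tensorRight, tensorLeft, LinearMap.coe_mk, AddHom.coe_mk]
    at hR hL
  -- an injective linear endomorphism `g` of `ι → ℝ` is onto, so two families filling up the
  -- same space `u ⊗ ℝ^ι` (or `ℝ^ι ⊗ w`) would overlap, against injectivity of `T`
  have clash : ∀ f : (ι → ℝ) → (ι → ℝ), ∀ g : (ι → ℝ) →ₗ[ℝ] (ι → ℝ),
      (∀ y, g y = 0 → T (vecMulVec x₀ y) = 0) →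
      (∀ y, g y = f x₁ → T (vecMulVec x₀ y) = T (vecMulVec x₁ x₀)) → False := by
    intro f g hg hfg
    have hinj : Function.Injective g := by
      rw [injective_iff_map_eq_zero]
      intro y hy
      exact (vecMulVec_eq_zero.mp (hT ((hg y hy).trans (map_zero T).symm))).resolve_left hx0
    obtain ⟨y, hy⟩ := LinearMap.injective_iff_surjective.mp hinj (f x₁)
    obtain ⟨c, hc⟩ := parallel_of_vecMulVec_eq (hT (hfg y hy)).symm hx0
    exact hx1 c hc
  rcases hR with ⟨p, hp⟩ | ⟨q, hq⟩ <;> rcases hL with ⟨p', hp'⟩ | ⟨q', hq'⟩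
  · exact (clash p' p (fun y hy => by rw [hp, hy, zero_vecMulVec])
      (fun y hy => by rw [hp, hy, hp'])).elim
  · -- `T` swaps the factors: precompose with the transpose
    let S : Matrix ι ι ℝ →ₗ[ℝ] Matrix ι ι ℝ :=
      T ∘ₗ (transposeLinearEquiv ι ι ℝ ℝ).toLinearMap
    have hS : ∀ x y, S (vecMulVec x y) = T (vecMulVec y x) := fun x y => by
      change T (vecMulVec x y)ᵀ = _
      rw [transpose_vecMulVec]
    have hSinj : Function.Injective S := hT.comp (transposeLinearEquiv ι ι ℝ ℝ).injective
    obtain ⟨P, Q, hPQ⟩ := exists_mul_mul S p q'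
      (rankOne_factor S hSinj (fun x y => by rw [hS]; exact hr y x) hu hw (x₀ := x₀) (y₀ := x₀)
        (by rw [hS, h0]) p q' (fun x => by rw [hS, hp]) (fun y => by rw [hS, hq']))
    refine ⟨P, Q, Or.inr fun X => ?_⟩
    rw [← hPQ]
    change _ = T Xᵀᵀ
    rw [transpose_transpose]
  · obtain ⟨P, Q, hPQ⟩ := exists_mul_mul T p' q
      (rankOne_factor T hT hr hu hw h0 p' q hp' hq)
    exact ⟨P, Q, Or.inl hPQ⟩
  · exact (clash q' q (fun y hy => by rw [hq, hy, vecMulVec_zero])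
      (fun y hy => by rw [hq, hy, hq'])).elim

/-! ### Maps adjoint with respect to a nondegenerate form -/

/-- Maps, not assumed linear, that are adjoint to each other's inverses for a nondegenerate form
are linear and bijective. Nondegeneracy makes the images under `g` of a basis linearly independent,
hence a basis, and testing against it shows that `f` is linear. -/
lemma exists_linear_of_form {V : Type*} [AddCommGroup V] [Module ℝ V] [FiniteDimensional ℝ V]
    (β : V →ₗ[ℝ] V →ₗ[ℝ] ℝ) (hβ : ∀ x, (∀ y, β x y = 0) → x = 0)
    (hβ' : ∀ y, (∀ x, β x y = 0) → y = 0) (f g : V → V)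
    (h : ∀ x y, β (f x) (g y) = β x y) :
    ∃ F : V →ₗ[ℝ] V, (∀ x, F x = f x) ∧ Function.Injective F ∧ Function.Surjective F := by
  let b := Module.finBasis ℝ V
  have hli : LinearIndependent ℝ (fun i => g (b i)) := by
    rw [Fintype.linearIndependent_iff]
    intro c hc
    have h0 : ∑ i, c i • b i = 0 := by
      refine hβ' _ fun x => ?_
      have := congrArg (β (f x)) hc
      simp only [map_sum, map_smul, h, map_zero] at this
      simpa only [map_sum, map_smul] using this
    exact Fintype.linearIndependent_iff.mp b.linearIndependent c h0
  have hspan : ⊤ ≤ Submodule.span ℝ (Set.range fun i => g (b i)) :=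
    (hli.span_eq_top_of_card_eq_finrank' (by simp)).ge
  let b' := Module.Basis.mk hli hspan
  have test : ∀ x, (∀ i, β x (g (b i)) = 0) → x = 0 := by
    intro x hx
    refine hβ x fun y => ?_
    have : β x = 0 := b'.ext fun i => by simpa [b'] using hx i
    rw [this]; rfl
  let F : V →ₗ[ℝ] V :=
    { toFun := f
      map_add' := fun x y => by
        refine sub_eq_zero.mp (test _ fun i => ?_)
        simp [h]
      map_smul' := fun c x => by
        refine sub_eq_zero.mp (test _ fun i => ?_)
        simp [h] }
  have hinj : Function.Injective F := by
    rw [injective_iff_map_eq_zero]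
    intro x hx
    refine hβ x fun y => ?_
    rw [← h]
    change β (F x) _ = 0
    rw [hx]; simp
  exact ⟨F, fun _ => rfl, hinj, LinearMap.injective_iff_surjective.mp hinj⟩

/-! ### The algebra `⟨DS_n⟩` -/

/-- The matrix all of whose entries are `1 / n`, the orthogonal projection onto the line of `e`. -/
noncomputable def avgMat (n : ℕ) : Matrix (Fin n) (Fin n) ℝ := of fun _ _ => (n : ℝ)⁻¹

lemma avgMat_mul_self {n : ℕ} (hn : n ≠ 0) : avgMat n * avgMat n = avgMat n := by
  ext i j
  have : (n : ℝ) ≠ 0 := Nat.cast_ne_zero.mpr hn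
  simp [avgMat, mul_apply, this]

lemma avgMat_transpose (n : ℕ) : (avgMat n)ᵀ = avgMat n := rfl

lemma avgMat_trace {n : ℕ} (hn : n ≠ 0) : (avgMat n).trace = 1 := by
  have : (n : ℝ) ≠ 0 := Nat.cast_ne_zero.mpr hn
  simp [avgMat, trace, this]

lemma avgMat_ne_zero {n : ℕ} (hn : n ≠ 0) : avgMat n ≠ 0 := fun h => by
  have := avgMat_trace hn
  simp [h] at this

/-- `⟨DS_n⟩` is the commutant of the averaging projection. -/
lemma inSpanDS_iff {n : ℕ} (A : Matrix (Fin n) (Fin n) ℝ) :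
    InSpanDS A ↔ A * avgMat n = avgMat n * A := by
  constructor
  · rintro ⟨c, h1, h2⟩
    ext i j
    have h1 := congrFun h1 i
    have h2 := congrFun h2 j
    simp only [mulVec, dotProduct, transpose_apply, mul_one, Pi.smul_apply, smul_eq_mul] at h1 h2
    simp [avgMat, mul_apply, ← Finset.sum_mul, h1, h2, mul_comm]
  · intro h
    rcases Nat.eq_zero_or_pos n with rfl | hn
    · exact ⟨0, funext fun i => i.elim0, funext fun i => i.elim0⟩
    have hn' : (n : ℝ)⁻¹ ≠ 0 := inv_ne_zero (Nat.cast_ne_zero.mpr hn.ne')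
    have key : ∀ i j, ∑ k, A i k = ∑ k, A k j := by
      intro i j
      have := congrFun (congrFun h i) j
      simp only [avgMat, mul_apply, of_apply, ← Finset.sum_mul, ← Finset.mul_sum] at this
      rw [mul_comm] at this
      exact mul_left_cancel₀ hn' this
    refine ⟨∑ k, A ⟨0, hn⟩ k, funext fun i => ?_, funext fun i => ?_⟩
    · simp only [mulVec, dotProduct, mul_one, Pi.smul_apply, smul_eq_mul]
      rw [key i ⟨0, hn⟩, key ⟨0, hn⟩ ⟨0, hn⟩]
    · simp only [mulVec, dotProduct, mul_one, Pi.smul_apply, smul_eq_mul, transpose_apply]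
      rw [key ⟨0, hn⟩ i]

/-- On `⟨DS_n⟩` the common row sum `c` is read off as a trace. -/
lemma mul_avgMat {n : ℕ} (hn : n ≠ 0) {A : Matrix (Fin n) (Fin n) ℝ} (hA : InSpanDS A) :
    A * avgMat n = (A * avgMat n).trace • avgMat n := by
  obtain ⟨c, h1, -⟩ := hA
  have : A * avgMat n = c • avgMat n := by
    ext i j
    have h1 := congrFun h1 i
    simp only [mulVec, dotProduct, mul_one, Pi.smul_apply, smul_eq_mul] at h1
    simp [avgMat, mul_apply, ← Finset.sum_mul, h1]
  rw [this, trace_smul, avgMat_trace hn, smul_eq_mul, mul_one]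

lemma InSpanDS.mul {n : ℕ} {A B : Matrix (Fin n) (Fin n) ℝ} (hA : InSpanDS A) (hB : InSpanDS B) :
    InSpanDS (A * B) := by
  rw [inSpanDS_iff] at *
  rw [mul_assoc, hB, ← mul_assoc, hA, mul_assoc]

lemma InSpanDS.add {n : ℕ} {A B : Matrix (Fin n) (Fin n) ℝ} (hA : InSpanDS A) (hB : InSpanDS B) :
    InSpanDS (A + B) := by
  rw [inSpanDS_iff] at *
  rw [add_mul, mul_add, hA, hB]

lemma InSpanDS.smul {n : ℕ} {A : Matrix (Fin n) (Fin n) ℝ} (c : ℝ) (hA : InSpanDS A) :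
    InSpanDS (c • A) := by
  rw [inSpanDS_iff] at *
  rw [smul_mul_assoc, mul_smul_comm, hA]

lemma InSpanDS.transpose {n : ℕ} {A : Matrix (Fin n) (Fin n) ℝ} (hA : InSpanDS A) :
    InSpanDS Aᵀ := by
  obtain ⟨c, h1, h2⟩ := hA
  exact ⟨c, h2, by rwa [transpose_transpose]⟩

lemma inSpanDS_one {n : ℕ} : InSpanDS (1 : Matrix (Fin n) (Fin n) ℝ) := by
  rw [inSpanDS_iff, one_mul, mul_one]

lemma inSpanDS_avgMat {n : ℕ} : InSpanDS (avgMat n) := by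
  rw [inSpanDS_iff]

lemma InSpanDS.inv {n : ℕ} {A : Matrix (Fin n) (Fin n) ℝ} (hA : InSpanDS A) (hu : IsUnit A) :
    InSpanDS A⁻¹ := by
  rw [inSpanDS_iff] at *
  have hd : IsUnit A.det := (isUnit_iff_isUnit_det A).mp hu
  calc A⁻¹ * avgMat n = A⁻¹ * (avgMat n * A) * A⁻¹ := by
        rw [mul_assoc, mul_assoc, mul_nonsing_inv _ hd, mul_one]
    _ = avgMat n * A⁻¹ := by rw [← hA, ← mul_assoc, nonsing_inv_mul _ hd, one_mul]

/-- `⟨DS_n⟩` as a subspace. -/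
def spanDS (n : ℕ) : Submodule ℝ (Matrix (Fin n) (Fin n) ℝ) where
  carrier := {A | InSpanDS A}
  add_mem' hA hB := InSpanDS.add hA hB
  zero_mem' := (inSpanDS_iff 0).mpr (by simp)
  smul_mem' c _ hA := InSpanDS.smul c hA

/-- The trace form is nondegenerate on `⟨DS_n⟩`, which is closed under transposition. -/
lemma eq_zero_of_trace {n : ℕ} {A : Matrix (Fin n) (Fin n) ℝ} (hA : InSpanDS A)
    (h : ∀ B, InSpanDS B → (A * B).trace = 0) : A = 0 := by
  have := h Aᵀ hA.transpose
  exact trace_mul_conjTranspose_self_eq_zero_iff.mp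
    (by rwa [conjTranspose_eq_transpose_of_trivial])

/-- Trace-preserving pairs are linear and bijective; `Φ` is a linear extension of `φ₁` to all
matrices. -/
lemma exists_linear_extension {n : ℕ} {φ₁ φ₂ : Matrix (Fin n) (Fin n) ℝ → Matrix (Fin n) (Fin n) ℝ}
    (hφ₁ : ∀ A, InSpanDS A → InSpanDS (φ₁ A)) (hφ₂ : ∀ A, InSpanDS A → InSpanDS (φ₂ A))
    (htr : ∀ A B, InSpanDS A → InSpanDS B → (φ₁ A * φ₂ B).trace = (A * B).trace) :
    ∃ Φ : Matrix (Fin n) (Fin n) ℝ →ₗ[ℝ] Matrix (Fin n) (Fin n) ℝ,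
      (∀ A, InSpanDS A → φ₁ A = Φ A) ∧ (∀ A, InSpanDS A → Φ A = 0 → A = 0) ∧
      ∀ B, InSpanDS B → ∃ A, InSpanDS A ∧ φ₁ A = B := by
  let β : spanDS n →ₗ[ℝ] spanDS n →ₗ[ℝ] ℝ := LinearMap.mk₂ ℝ
    (fun A B => (A.1 * B.1).trace)
    (fun A B C => by simp [add_mul]) (fun c A B => by simp)
    (fun A B C => by simp [mul_add]) (fun c A B => by simp)
  obtain ⟨F, hF, hinj, hsurj⟩ := exists_linear_of_form β
    (fun A h => Subtype.ext (eq_zero_of_trace A.2 fun B hB => h ⟨B, hB⟩))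
    (fun A h => Subtype.ext (eq_zero_of_trace A.2 fun B hB => by
      rw [trace_mul_comm]; exact h ⟨B, hB⟩))
    (fun A => ⟨φ₁ A, hφ₁ A A.2⟩) (fun A => ⟨φ₂ A, hφ₂ A A.2⟩)
    (fun A B => htr A B A.2 B.2)
  obtain ⟨Φ, hΦ⟩ := LinearMap.exists_extend ((spanDS n).subtype ∘ₗ F)
  have hΦ' : ∀ A (hA : InSpanDS A), Φ A = (F ⟨A, hA⟩).1 := fun A hA =>
    LinearMap.congr_fun hΦ ⟨A, hA⟩
  refine ⟨Φ, fun A hA => ?_, fun A hA h => ?_, fun B hB => ?_⟩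
  · rw [hΦ' A hA, hF]
  · rw [hΦ' A hA] at h
    exact congrArg Subtype.val (hinj (Subtype.ext (h.trans (by simp))) : (⟨A, hA⟩ : spanDS n) = 0)
  · obtain ⟨A, hA⟩ := hsurj ⟨B, hB⟩
    rw [hF] at hA
    exact ⟨A, A.2, congrArg Subtype.val hA⟩

lemma exists_vecMulVec_of_rank_le_one {m n : ℕ} {A : Matrix (Fin m) (Fin n) ℝ} (h : A.rank ≤ 1) :
    ∃ u v, A = vecMulVec u v := by
  rw [Matrix.rank, finrank_le_one_iff] at h
  obtain ⟨u, hu⟩ := h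
  choose c hc using fun j => hu ⟨A *ᵥ Pi.single j 1, ⟨Pi.single j 1, rfl⟩⟩
  refine ⟨u.1, c, ?_⟩
  ext i j
  have := congrFun (congrArg Subtype.val (hc j)) i
  simp only [Submodule.coe_smul, Pi.smul_apply, smul_eq_mul, mulVec_single_one, col_apply] at this
  rw [← this, vecMulVec_apply, mul_comm]

/-- A matrix of rank at most one in `⟨DS_n⟩` is a multiple of the averaging projection or is
annihilated by it. -/
lemma rankOne_cases {n : ℕ} (hn : n ≠ 0) {A : Matrix (Fin n) (Fin n) ℝ} (hA : InSpanDS A)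
    (hr : ∃ u v, A = vecMulVec u v) : (∃ c : ℝ, A = c • avgMat n) ∨ A * avgMat n = 0 := by
  obtain ⟨u, v, rfl⟩ := hr
  have h1 := mul_avgMat hn hA
  have h2 := ((inSpanDS_iff _).mp hA).symm.trans h1
  set s := (vecMulVec u v * avgMat n).trace
  by_cases hs : s = 0
  · right; rw [h1, hs, zero_smul]
  left
  have hn' : (n : ℝ) ≠ 0 := Nat.cast_ne_zero.mpr hn
  -- both factors are constant vectors
  have e1 : ∀ i, u i * ∑ k, v k = s := fun i => by
    have := congrFun (congrFun h1 i) i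
    simp only [avgMat, mul_apply, vecMulVec_apply, of_apply, Matrix.smul_apply, smul_eq_mul,
      ← Finset.sum_mul, ← Finset.mul_sum] at this
    exact mul_right_cancel₀ (inv_ne_zero hn') this
  have e2 : ∀ i, (∑ k, u k) * v i = s := fun i => by
    have := congrFun (congrFun h2 i) i
    simp only [avgMat, mul_apply, vecMulVec_apply, of_apply, Matrix.smul_apply, smul_eq_mul,
      ← Finset.sum_mul, ← Finset.mul_sum] at this
    rw [mul_comm s] at this
    exact mul_left_cancel₀ (inv_ne_zero hn') this
  have hv : ∑ k, v k ≠ 0 := fun h => hs (by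
    rw [← e1 ⟨0, Nat.pos_of_ne_zero hn⟩, h, mul_zero])
  have hu : ∑ k, u k ≠ 0 := fun h => hs (by
    rw [← e2 ⟨0, Nat.pos_of_ne_zero hn⟩, h, zero_mul])
  refine ⟨n * (s / ∑ k, v k) * (s / ∑ k, u k), ?_⟩
  ext i j
  have f1 : u i = s / ∑ k, v k := by rw [eq_div_iff hv, e1]
  have f2 : v j = s / ∑ k, u k := by rw [eq_div_iff hu, mul_comm, e2]
  simp only [vecMulVec_apply, Matrix.smul_apply, avgMat, of_apply, smul_eq_mul]
  rw [f1, f2]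
  field_simp

/-! ### Preserving spectra implies preserving rank one -/

/-- `⟨DS_n⟩` is von Neumann regular: a generalized inverse, compressed to the two blocks cut out by
the averaging projection, lies in `⟨DS_n⟩`. -/
lemma exists_generalized_inverse {n : ℕ} (hn : n ≠ 0) {M : Matrix (Fin n) (Fin n) ℝ}
    (hM : InSpanDS M) : ∃ G, InSpanDS G ∧ M * G * M = M := by
  have hG : ∃ G : Matrix (Fin n) (Fin n) ℝ, M * G * M = M := by
    let f := toLin' M
    obtain ⟨s, hs⟩ := f.rangeRestrict.exists_rightInverse_of_surjective
      (LinearMap.range_rangeRestrict f)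
    obtain ⟨p, hp⟩ := LinearMap.exists_leftInverse_of_injective (LinearMap.range f).subtype
      (LinearMap.range f).ker_subtype
    refine ⟨LinearMap.toMatrix' (s ∘ₗ p), ?_⟩
    apply toLin'.injective
    rw [toLin'_mul, toLin'_mul, toLin'_toMatrix']
    refine LinearMap.ext fun x => ?_
    have h1 : p (f x) = f.rangeRestrict x := LinearMap.congr_fun hp (f.rangeRestrict x)
    have h2 := congrArg Subtype.val (LinearMap.congr_fun hs (f.rangeRestrict x))
    change f (s (p (f x))) = f x
    rw [h1]
    exact h2
  obtain ⟨G, hG⟩ := hG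
  have hE := avgMat_mul_self hn
  have hc := (inSpanDS_iff M).mp hM
  set E := avgMat n with hEdef
  have hE1 : (1 - E) * E = 0 := by rw [sub_mul, one_mul, hE, sub_self]
  have hE2 : E * (1 - E) = 0 := by rw [mul_sub, mul_one, hE, sub_self]
  have hc1 : M * (1 - E) = (1 - E) * M := by rw [mul_sub, sub_mul, hc, mul_one, one_mul]
  refine ⟨E * G * E + (1 - E) * G * (1 - E), ?_, ?_⟩
  · rw [inSpanDS_iff, ← hEdef, add_mul, mul_add, mul_assoc _ (1 - E) E, hE1, mul_zero, mul_assoc,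
      hE, mul_assoc (1 - E), ← mul_assoc E (1 - E), hE2, zero_mul, ← mul_assoc E, ← mul_assoc E, hE]
  · calc M * (E * G * E + (1 - E) * G * (1 - E)) * M
        = (M * E) * G * (E * M) + (M * (1 - E)) * G * ((1 - E) * M) := by noncomm_ring
      _ = (E * M) * G * (M * E) + ((1 - E) * M) * G * (M * (1 - E)) := by rw [hc, hc1]
      _ = E * (M * G * M) * E + (1 - E) * (M * G * M) * (1 - E) := by noncomm_ring
      _ = M := by
        rw [hG, ← hc, mul_assoc, hE, ← hc1, mul_assoc,
          show (1 - E) * (1 - E) = 1 - E by rw [mul_sub, hE1, mul_one, sub_zero],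
          ← mul_add, add_sub_cancel, mul_one]

lemma det_one_sub_vecMulVec {n : ℕ} (u v : Fin n → ℝ) :
    (1 - vecMulVec u v).det = 1 - (vecMulVec u v).trace := by
  have h := det_one_add_replicateCol_mul_replicateRow (ι := Unit) (-u) v
  rw [← vecMulVec_eq, neg_vecMulVec, ← sub_eq_add_neg] at h
  rw [h, trace_vecMulVec, dotProduct_neg, dotProduct_comm, sub_eq_add_neg]

lemma trace_eq_of_charpoly_eq {n : ℕ} (hn : n ≠ 0) {A B : Matrix (Fin n) (Fin n) ℝ}
    (h : A.charpoly = B.charpoly) : A.trace = B.trace := by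
  have : Nonempty (Fin n) := ⟨⟨0, Nat.pos_of_ne_zero hn⟩⟩
  rw [trace_eq_neg_charpoly_coeff, trace_eq_neg_charpoly_coeff, h]

/-- If `A` has rank at most one and `M = φ₁ A` has generalized inverse `G = φ₂ B`, then `M G` is
idempotent and has the characteristic polynomial of `A B`, a matrix of rank at most one, so
`det (1 - A B) = 1 - tr (A B)`. For `M ≠ 0` the left side is `det (1 - M G) = 0`, whence
`rank M = tr (M G) = 1`. -/
lemma trace_rank_of_charpoly {n : ℕ} (hn : n ≠ 0)
    {φ₁ φ₂ : Matrix (Fin n) (Fin n) ℝ → Matrix (Fin n) (Fin n) ℝ}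
    (hφ₁ : ∀ A, InSpanDS A → InSpanDS (φ₁ A)) (hφ₂ : ∀ A, InSpanDS A → InSpanDS (φ₂ A))
    (h : ∀ A B, InSpanDS A → InSpanDS B → (φ₁ A * φ₂ B).charpoly = (A * B).charpoly) :
    (∀ A B, InSpanDS A → InSpanDS B → (φ₁ A * φ₂ B).trace = (A * B).trace) ∧
      ∀ A, InSpanDS A → A.rank ≤ 1 → (φ₁ A).rank ≤ 1 := by
  have htr : ∀ A B, InSpanDS A → InSpanDS B → (φ₁ A * φ₂ B).trace = (A * B).trace :=
    fun A B hA hB => trace_eq_of_charpoly_eq hn (h A B hA hB)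
  refine ⟨htr, fun A hA hr => ?_⟩
  obtain ⟨-, -, -, hsurj⟩ := exists_linear_extension hφ₂ hφ₁
    (fun A B hA hB => by rw [trace_mul_comm, htr B A hB hA, trace_mul_comm])
  obtain ⟨G, hG, hMG⟩ := exists_generalized_inverse hn (hφ₁ A hA)
  obtain ⟨B, hB, rfl⟩ := hsurj G hG
  set M := φ₁ A
  by_cases hM : M = 0
  · rw [hM]; simp
  set N := M * φ₂ B
  have hN : IsIdempotentElem N := by
    change M * φ₂ B * (M * φ₂ B) = M * φ₂ B
    rw [← mul_assoc, hMG]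
  have hN0 : N ≠ 0 := fun h => hM (by rw [← hMG, h, zero_mul])
  have hdet : (1 - N).det = 1 - N.trace := by
    have e1 := congrArg (Polynomial.eval 1) (h A B hA hB)
    rw [eval_charpoly, eval_charpoly, map_one] at e1
    obtain ⟨u, v, rfl⟩ := exists_vecMulVec_of_rank_le_one hr
    have e2 := htr _ B hA hB
    rw [vecMulVec_mul] at e1 e2
    rw [e1, e2, det_one_sub_vecMulVec]
  have hdet0 : (1 - N).det = 0 := by
    by_contra hne
    have hu : IsUnit (1 - N) := (isUnit_iff_isUnit_det _).mpr (isUnit_iff_ne_zero.mpr hne)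
    have : (1 - N) * N = 0 := by rw [sub_mul, one_mul, hN.eq, sub_self]
    exact hN0 (hu.mul_right_eq_zero.mp this)
  have htrN : N.trace = 1 := by linarith
  have hlin : IsIdempotentElem N.mulVecLin := by
    change N.mulVecLin * N.mulVecLin = N.mulVecLin
    rw [Module.End.mul_eq_comp, ← mulVecLin_mul, hN.eq]
  have hrank : (N.rank : ℝ) = 1 := by
    rw [← htrN, ← trace_toLin'_eq]
    exact (LinearMap.IsProj.trace (LinearMap.IsIdempotentElem.isProj_range _ hlin)).symm
  calc M.rank = (N * M).rank := by rw [hMG]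
    _ ≤ N.rank := rank_mul_le_left _ _
    _ ≤ 1 := by exact_mod_cast hrank.le

/-! ### Rank-one preservers on `⟨DS_n⟩` for `n ≥ 3` -/

/-- A matrix `W` whose columns form an orthonormal basis of `e^⊥`. -/
lemma exists_isometry (m : ℕ) : ∃ W : Matrix (Fin (m + 1)) (Fin m) ℝ,
    Wᵀ * W = 1 ∧ W * Wᵀ = 1 - avgMat (m + 1) := by
  have hpos : (0 : ℝ) < (m : ℝ) + 1 := by positivity
  let v : Fin (m + 1) → EuclideanSpace ℝ (Fin (m + 1)) :=
    fun _ => WithLp.toLp 2 fun _ => (√((m : ℝ) + 1))⁻¹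
  have hv : Orthonormal ℝ (({0} : Set (Fin (m + 1))).domRestrict v) := by
    refine ⟨fun i => ?_, fun i j hij => (hij (Subsingleton.elim i j)).elim⟩
    have hsq : √((m : ℝ) + 1) ^ 2 = (m : ℝ) + 1 := Real.sq_sqrt hpos.le
    rw [Set.domRestrict_apply, EuclideanSpace.norm_eq]
    simp [v, hsq, hpos.ne']
  obtain ⟨b, hb⟩ := hv.exists_orthonormalBasis_extension_of_card_eq (by simp)
  have hb0 : b 0 = v 0 := hb 0 rfl
  let U : Matrix (Fin (m + 1)) (Fin (m + 1)) ℝ := of fun i j => b j i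
  have hU : Uᵀ * U = 1 := by
    ext i j
    have := orthonormal_iff_ite.mp b.orthonormal i j
    rw [PiLp.inner_apply] at this
    simpa [U, mul_apply, one_apply, mul_comm] using this
  have hU' : U * Uᵀ = 1 := mul_eq_one_comm.mp hU
  refine ⟨of fun i j => b j.succ i, ?_, ?_⟩
  · ext i j
    have := congrFun (congrFun hU i.succ) j.succ
    simpa [U, mul_apply, one_apply] using this
  · ext i j
    have := congrFun (congrFun hU' i) j
    rw [mul_apply, Fin.sum_univ_succ] at this
    have hsq : (√((m : ℝ) + 1))⁻¹ * (√((m : ℝ) + 1))⁻¹ = ((m : ℝ) + 1)⁻¹ := by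
      rw [← mul_inv, Real.mul_self_sqrt hpos.le]
    simp only [U, of_apply, transpose_apply, hb0, v, hsq] at this
    simp only [mul_apply, of_apply, transpose_apply, Matrix.sub_apply, avgMat, Nat.cast_add,
      Nat.cast_one]
    linarith

/-- A linear bijection of `⟨DS_n⟩` that does not increase rank one must preserve the splitting of
`⟨DS_n⟩` into multiples of the averaging projection and matrices vanishing on `e`, as the sum of
nonzero matrices from the two summands never has rank one. The second summand is a full matrix
algebra of size `n - 1 ≥ 2`, on which `rankOne_preserver` applies. -/
lemma rankOne_preserver_spanDS {m : ℕ} (hm : 2 ≤ m)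
    (Φ : Matrix (Fin (m + 1)) (Fin (m + 1)) ℝ →ₗ[ℝ] Matrix (Fin (m + 1)) (Fin (m + 1)) ℝ)
    (hΦ : ∀ A, InSpanDS A → InSpanDS (Φ A)) (hinj : ∀ A, InSpanDS A → Φ A = 0 → A = 0)
    (hsurj : ∃ A, InSpanDS A ∧ Φ A = avgMat (m + 1))
    (hr : ∀ A, InSpanDS A → (∃ u v, A = vecMulVec u v) → ∃ u v, Φ A = vecMulVec u v) :
    ∃ L R, InSpanDS L ∧ InSpanDS R ∧
      ((∀ A, InSpanDS A → Φ A = L * A * R) ∨ (∀ A, InSpanDS A → Φ A = L * Aᵀ * R)) := by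
  obtain ⟨W, hW1, hW2⟩ := exists_isometry m
  have hn : m + 1 ≠ 0 := Nat.succ_ne_zero m
  have hEE := avgMat_mul_self hn
  have hE0 := avgMat_ne_zero hn
  have hEt := avgMat_transpose (m + 1)
  have hEm : InSpanDS (avgMat (m + 1)) := inSpanDS_avgMat
  have hDE := fun A => inSpanDS_iff (n := m + 1) A
  have hEr : ∃ u v, avgMat (m + 1) = vecMulVec u v :=
    ⟨fun _ => ((m + 1 : ℕ) : ℝ)⁻¹, fun _ => 1, by ext; simp [avgMat, vecMulVec_apply]⟩
  have hcases := fun A hA hA' => rankOne_cases hn (A := A) hA hA'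
  have hσ := fun A hA => mul_avgMat hn (A := A) hA
  set E := avgMat (m + 1) with hEdef
  clear_value E
  have hWE : Wᵀ * E = 0 := by
    have : Wᵀ * (W * Wᵀ) = Wᵀ := by rw [← Matrix.mul_assoc, hW1, Matrix.one_mul]
    rw [hW2, Matrix.mul_sub, Matrix.mul_one] at this
    simpa using this
  have hEW : E * W = 0 := by
    have := congrArg transpose hWE
    simpa [transpose_mul, hEt] using this
  have hKE : ∀ X : Matrix (Fin m) (Fin m) ℝ, W * X * Wᵀ * E = 0 := fun X => by
    rw [Matrix.mul_assoc, hWE, Matrix.mul_zero]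
  have hEK : ∀ X : Matrix (Fin m) (Fin m) ℝ, E * (W * X * Wᵀ) = 0 := fun X => by
    rw [← Matrix.mul_assoc, ← Matrix.mul_assoc, hEW, Matrix.zero_mul, Matrix.zero_mul]
  have hKD : ∀ X : Matrix (Fin m) (Fin m) ℝ, InSpanDS (W * X * Wᵀ) := fun X => by rw [hDE, hKE, hEK]
  have hback : ∀ X : Matrix (Fin m) (Fin m) ℝ, Wᵀ * (W * X * Wᵀ) * W = X := fun X => by
    calc Wᵀ * (W * X * Wᵀ) * W = (Wᵀ * W) * X * (Wᵀ * W) := by simp only [Matrix.mul_assoc]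
      _ = X := by rw [hW1, Matrix.one_mul, Matrix.mul_one]
  have hforth : ∀ A, InSpanDS A → A * E = 0 → W * (Wᵀ * A * W) * Wᵀ = A := fun A hA h => by
    have h' : E * A = 0 := by rw [← (hDE A).mp hA, h]
    calc W * (Wᵀ * A * W) * Wᵀ = (W * Wᵀ) * A * (W * Wᵀ) := by simp only [Matrix.mul_assoc]
      _ = A := by
        rw [hW2, Matrix.sub_mul, Matrix.one_mul, h', sub_zero, Matrix.mul_sub, Matrix.mul_one, h,
          sub_zero]
  -- `K X = W X Wᵀ` identifies `m × m` matrices with the second summand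
  let K : Matrix (Fin m) (Fin m) ℝ →ₗ[ℝ] Matrix (Fin (m + 1)) (Fin (m + 1)) ℝ :=
    { toFun := fun X => W * X * Wᵀ
      map_add' := fun X Y => by rw [Matrix.mul_add, Matrix.add_mul]
      map_smul' := fun c X => by simp }
  have hKdef : ∀ X : Matrix (Fin m) (Fin m) ℝ, K X = W * X * Wᵀ := fun _ => rfl
  have hK0 : ∀ X : Matrix (Fin m) (Fin m) ℝ, Φ (K X) = 0 → X = 0 := fun X h => by
    have := hinj _ (hKD X) h
    rw [← hback X, this, Matrix.mul_zero, Matrix.zero_mul]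
  have hKr : ∀ x y, ∃ u v, K (vecMulVec x y) = vecMulVec u v := fun x y =>
    ⟨W *ᵥ x, W *ᵥ y, by rw [hKdef, mul_vecMulVec, vecMulVec_mul, vecMul_transpose]⟩
  have hm' : Nontrivial (Fin m) := Fin.nontrivial_iff_two_le.mpr hm
  -- If `Φ` took some `x yᵀ` to `c E ≠ 0`, it would take all of `x ⊗ ℝᵐ` to the line `ℝ E`, against
  -- injectivity, because `m ≥ 2`.
  have hbase : ∀ x y, Φ (K (vecMulVec x y)) * E = 0 := by
    intro x y
    by_contra hne
    have hcase := fun y => hcases _ (hΦ _ (hKD (vecMulVec x y))) (hr _ (hKD _) (hKr x y))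
    obtain ⟨c, hc⟩ := (hcase y).resolve_right hne
    have hc0 : c ≠ 0 := by
      rintro rfl
      rw [zero_smul] at hc
      exact hne (by rw [hKdef, hc, Matrix.zero_mul])
    have hx : x ≠ 0 := by
      rintro rfl
      rw [zero_vecMulVec, map_zero, map_zero, Matrix.zero_mul] at hne
      exact hne rfl
    obtain ⟨y', hy'⟩ := exists_not_parallel y
    have hd : ∃ d : ℝ, Φ (K (vecMulVec x y')) = d • E := by
      rcases hcase y' with h | h
      · exact h
      have hsum : Φ (K (vecMulVec x (y + y'))) = c • E + Φ (K (vecMulVec x y')) := by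
        rw [vecMulVec_add, map_add, map_add, hKdef (vecMulVec x y), hc]
      rcases hcase (y + y') with ⟨k, hk⟩ | hk
      · refine ⟨k - c, ?_⟩
        rw [sub_smul, ← hk, ← hKdef, hsum]; abel
      · exfalso
        rw [← hKdef, hsum, Matrix.add_mul, hKdef, h, add_zero, Matrix.smul_mul, hEE] at hk
        exact hc0 ((smul_eq_zero.mp hk).resolve_right hE0)
    obtain ⟨d, hd⟩ := hd
    have hz : Φ (K (vecMulVec x (c • y' - d • y))) = 0 := by
      rw [vecMulVec_sub, vecMulVec_smul, vecMulVec_smul, map_sub, map_sub, map_smul, map_smul,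
        map_smul, map_smul, hd, hKdef (vecMulVec x y), hc, smul_smul, smul_smul, mul_comm, sub_self]
    have hz' := (vecMulVec_eq_zero.mp (hK0 _ hz)).resolve_left hx
    refine hy' (c⁻¹ * d) ?_
    rw [mul_smul, ← sub_eq_zero.mp hz', smul_smul, inv_mul_cancel₀ hc0, one_smul]
  have hall : ∀ X : Matrix (Fin m) (Fin m) ℝ, Φ (K X) * E = 0 := fun X => by
    have : (LinearMap.mulRight ℝ E) ∘ₗ Φ ∘ₗ K = 0 :=
      linearMap_ext_rankOne _ _ fun x y => hbase x y
    exact LinearMap.congr_fun this X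
  have hsplit : ∀ A, InSpanDS A → A = (A * E).trace • E + K (Wᵀ * A * W) := by
    intro A hA
    have h1 : InSpanDS (A - A * E) := by
      rw [hDE, Matrix.sub_mul, Matrix.mul_assoc, hEE, Matrix.mul_sub, ← Matrix.mul_assoc,
        ← (hDE A).mp hA, Matrix.mul_assoc, hEE]
    have h2 : (A - A * E) * E = 0 := by rw [Matrix.sub_mul, Matrix.mul_assoc, hEE, sub_self]
    have h3 := hforth _ h1 h2
    rw [Matrix.mul_sub, Matrix.sub_mul, ← Matrix.mul_assoc Wᵀ, Matrix.mul_assoc (Wᵀ * A) E W, hEW,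
      Matrix.mul_zero, sub_zero] at h3
    rw [hKdef, h3, ← hσ A hA]; abel
  have hα : ∃ α : ℝ, Φ E = α • E := by
    refine (hcases _ (hΦ _ hEm) (hr _ hEm hEr)).resolve_right fun h => ?_
    obtain ⟨A, hA, hAE⟩ := hsurj
    rw [hsplit A hA, map_add, map_smul] at hAE
    apply hE0
    rw [← hEE]
    nth_rewrite 1 [← hAE]
    rw [Matrix.add_mul, Matrix.smul_mul, h, smul_zero, hall, add_zero]
  obtain ⟨α, hα⟩ := hα
  let T : Matrix (Fin m) (Fin m) ℝ →ₗ[ℝ] Matrix (Fin m) (Fin m) ℝ :=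
    { toFun := fun X => Wᵀ * Φ (K X) * W
      map_add' := fun X Y => by rw [map_add, map_add, Matrix.mul_add, Matrix.add_mul]
      map_smul' := fun c X => by simp }
  have hTdef : ∀ X : Matrix (Fin m) (Fin m) ℝ, T X = Wᵀ * Φ (K X) * W := fun _ => rfl
  have hKT : ∀ X : Matrix (Fin m) (Fin m) ℝ, K (T X) = Φ (K X) := fun X =>
    hforth _ (hΦ _ (hKD X)) (hall X)
  have hTinj : Function.Injective T := by
    rw [injective_iff_map_eq_zero]
    intro X hX
    refine hK0 X ?_
    rw [← hKT, hX, map_zero]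
  have hTr : ∀ x y, ∃ p q, T (vecMulVec x y) = vecMulVec p q := fun x y => by
    obtain ⟨u, v, huv⟩ := hr _ (hKD _) (hKr x y)
    exact ⟨Wᵀ *ᵥ u, v ᵥ* W, by rw [hTdef, hKdef, huv, mul_vecMulVec, vecMulVec_mul]⟩
  obtain ⟨P, Q, hPQ⟩ := rankOne_preserver T hTinj hTr
  -- the block-diagonal matrices with blocks `α, P` and `1, Q`
  have hblock : ∀ (s : ℝ) (X : Matrix (Fin m) (Fin m) ℝ),
      (α • E + K P) * (s • E + K X) * (E + K Q) = s • α • E + K (P * X * Q) := by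
    intro s X
    have e1 : K P * K X = K (P * X) := by
      simp only [hKdef]
      calc W * P * Wᵀ * (W * X * Wᵀ) = W * P * (Wᵀ * W) * X * Wᵀ := by simp only [Matrix.mul_assoc]
        _ = _ := by rw [hW1, Matrix.mul_one]; simp only [Matrix.mul_assoc]
    have e2 : K (P * X) * K Q = K (P * X * Q) := by
      simp only [hKdef]
      calc W * (P * X) * Wᵀ * (W * Q * Wᵀ) = W * (P * X) * (Wᵀ * W) * Q * Wᵀ := by
            simp only [Matrix.mul_assoc]
        _ = _ := by rw [hW1, Matrix.mul_one]; simp only [Matrix.mul_assoc]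
    have k1 : ∀ X : Matrix (Fin m) (Fin m) ℝ, K X * E = 0 := hKE
    have k2 : ∀ X : Matrix (Fin m) (Fin m) ℝ, E * K X = 0 := hEK
    simp only [Matrix.add_mul, Matrix.mul_add, Matrix.smul_mul, Matrix.mul_smul, hEE, k1, k2,
      e1, e2, smul_zero, add_zero, zero_add]
  have hL : InSpanDS (α • E + K P) := (hEm.smul α).add (hKD P)
  have hR : InSpanDS (E + K Q) := hEm.add (hKD Q)
  refine ⟨_, _, hL, hR, ?_⟩
  rcases hPQ with hPQ | hPQ
  · left
    intro A hA
    have hs := hsplit A hA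
    generalize (A * E).trace = s, Wᵀ * A * W = X at hs
    rw [hs, hblock, map_add, map_smul, hα, ← hKT, hPQ]
  · right
    intro A hA
    have hs := hsplit A hA
    generalize (A * E).trace = s, Wᵀ * A * W = X at hs
    have ht : (s • E + K X)ᵀ = s • E + K Xᵀ := by
      rw [transpose_add, transpose_smul, hEt, hKdef, hKdef, transpose_mul, transpose_mul,
        transpose_transpose, Matrix.mul_assoc]
    rw [hs, ht, hblock, map_add, map_smul, hα, ← hKT, hPQ]

/-! ### Rank-one preservers on `⟨DS_2⟩` -/

/-- The matrix `diag(1, -1)`. -/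
def signMat : Matrix (Fin 2) (Fin 2) ℝ :=
  Matrix.diagonal (fun i => if i.val = 0 then (1:ℝ) else -1)

lemma signMat_mul_self : signMat * signMat = 1 := by
  ext i j; fin_cases i <;> fin_cases j <;> simp [signMat, mul_apply, diagonal]

lemma signMat_inv : signMat⁻¹ = signMat := inv_eq_right_inv signMat_mul_self

lemma isUnit_signMat : IsUnit signMat :=
  ⟨⟨signMat, signMat, signMat_mul_self, signMat_mul_self⟩, rfl⟩

/-- Conjugation by `diag(1, -1)` exchanges the two minimal idempotents of `⟨DS_2⟩ ≅ ℝ × ℝ`. -/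
lemma signMat_conj_avgMat : signMat * avgMat 2 * signMat = 1 - avgMat 2 := by
  ext i j; fin_cases i <;> fin_cases j <;> norm_num [signMat, avgMat, mul_apply, diagonal]

lemma inSpanDS_signMat_conj {A : Matrix (Fin 2) (Fin 2) ℝ} (hA : InSpanDS A) :
    InSpanDS (signMat * A * signMat) := by
  rw [inSpanDS_iff] at *
  have h1 : signMat * avgMat 2 = (1 - avgMat 2) * signMat := by
    rw [← signMat_conj_avgMat, mul_assoc _ signMat, signMat_mul_self, mul_one]
  have h2 : avgMat 2 * signMat = signMat * (1 - avgMat 2) := by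
    rw [mul_sub, h1, mul_one, sub_mul, one_mul, sub_sub_cancel]
  calc signMat * A * signMat * avgMat 2 = signMat * (A * (1 - avgMat 2)) * signMat := by
        rw [mul_assoc (signMat * A), h1]; simp only [mul_assoc]
    _ = signMat * (1 - avgMat 2) * A * signMat := by
        rw [mul_sub, mul_one, hA]; noncomm_ring
    _ = avgMat 2 * (signMat * A * signMat) := by rw [← h2]; simp only [mul_assoc]

lemma spanDS_two_split {A : Matrix (Fin 2) (Fin 2) ℝ} (hA : InSpanDS A) :
    ∃ s t : ℝ, A = s • avgMat 2 + t • (1 - avgMat 2) := by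
  obtain ⟨c, h1, h2⟩ := hA
  have a := congrFun h1 0
  have b := congrFun h1 1
  have a' := congrFun h2 0
  simp [mulVec, dotProduct, Fin.sum_univ_two] at a b a'
  refine ⟨A 0 0 + A 0 1, A 0 0 - A 0 1, ?_⟩
  ext i j
  fin_cases i <;> fin_cases j <;> simp [avgMat] <;> linarith

/-- For `n = 2` the map permutes, up to scalars, the two minimal idempotents `E` and `1 - E`. -/
lemma rankOne_preserver_two
    (Φ : Matrix (Fin 2) (Fin 2) ℝ →ₗ[ℝ] Matrix (Fin 2) (Fin 2) ℝ)
    (hΦ : ∀ A, InSpanDS A → InSpanDS (Φ A)) (hinj : ∀ A, InSpanDS A → Φ A = 0 → A = 0)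
    (hr : ∀ A, InSpanDS A → (∃ u v, A = vecMulVec u v) → ∃ u v, Φ A = vecMulVec u v) :
    ∃ C P, InSpanDS C ∧ (P = 1 ∨ P = signMat) ∧
      ∀ A, InSpanDS A → Φ A = C * (P * A * P⁻¹) := by
  have hEE := avgMat_mul_self (n := 2) (by norm_num)
  have hE0 := avgMat_ne_zero (n := 2) (by norm_num)
  have hEm : InSpanDS (avgMat 2) := inSpanDS_avgMat
  have hEr : ∃ u v, avgMat 2 = vecMulVec u v :=
    ⟨fun _ => ((2 : ℕ) : ℝ)⁻¹, fun _ => 1, by ext; simp [avgMat, vecMulVec_apply]⟩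
  have hFr : ∃ u v, 1 - avgMat 2 = vecMulVec u v := by
    refine ⟨![1, -1], ![1 / 2, -1 / 2], ?_⟩
    ext i j; fin_cases i <;> fin_cases j <;> norm_num [avgMat, vecMulVec_apply]
  have hF0 : 1 - avgMat 2 ≠ 0 := fun h => by
    have := congrFun (congrFun h 0) 1
    norm_num [avgMat] at this
  have hsw := signMat_conj_avgMat
  have hsplit := fun A hA => spanDS_two_split (A := A) hA
  have hcases := fun A hA hA' => rankOne_cases (n := 2) (by norm_num) (A := A) hA hA'
  set E := avgMat 2
  clear_value E
  set F := 1 - E with hF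
  have hFm : InSpanDS F := by
    simpa [hF, sub_eq_add_neg] using inSpanDS_one.add (hEm.smul (-1))
  have hEF : E * F = 0 := by rw [hF, mul_sub, mul_one, hEE, sub_self]
  have hFE : F * E = 0 := by rw [hF, sub_mul, one_mul, hEE, sub_self]
  have hFF : F * F = F := by nth_rewrite 1 [hF]; rw [sub_mul, one_mul, hEF, sub_zero]
  have hline : ∀ A, InSpanDS A → (∃ u v, A = vecMulVec u v) →
      (∃ c : ℝ, Φ A = c • E) ∨ ∃ c : ℝ, Φ A = c • F := by
    intro A hA hA'
    refine (hcases _ (hΦ A hA) (hr A hA hA')).imp id fun h => ?_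
    obtain ⟨s, t, hst⟩ := hsplit _ (hΦ A hA)
    rw [hst, add_mul, smul_mul_assoc, smul_mul_assoc, hEE, hFE, smul_zero, add_zero] at h
    exact ⟨t, by rw [hst, h, zero_add]⟩
  have hclash : ∀ (X : Matrix (Fin 2) (Fin 2) ℝ) (a b : ℝ), Φ E = a • X → Φ F = b • X → False := by
    intro X a b ha hb
    have hz : b • E + (-a) • F = 0 := by
      refine hinj _ ((hEm.smul b).add (hFm.smul (-a))) ?_
      rw [map_add, map_smul, map_smul, ha, hb, smul_smul, smul_smul, mul_comm, ← add_smul]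
      simp
    have h1 := congrArg (· * E) hz
    simp only [add_mul, smul_mul_assoc, hEE, hFE, smul_zero, add_zero, zero_mul] at h1
    have hb0 := (smul_eq_zero.mp h1).resolve_right hE0
    exact hF0 (hinj F hFm (by rw [hb, hb0, zero_smul]))
  rcases hline E hEm hEr with ⟨a, ha⟩ | ⟨a, ha⟩ <;> rcases hline F hFm hFr with ⟨b, hb⟩ | ⟨b, hb⟩
  · exact (hclash E a b ha hb).elim
  · refine ⟨a • E + b • F, 1, (hEm.smul a).add (hFm.smul b), Or.inl rfl, fun A hA => ?_⟩
    obtain ⟨s, t, rfl⟩ := hsplit A hA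
    simp only [map_add, map_smul, ha, hb, inv_one, one_mul, mul_one, add_mul, mul_add,
      smul_mul_assoc, mul_smul_comm, hEE, hEF, hFE, hFF, smul_zero, add_zero, zero_add]
  · refine ⟨b • E + a • F, signMat, (hEm.smul b).add (hFm.smul a), Or.inr rfl, fun A hA => ?_⟩
    obtain ⟨s, t, rfl⟩ := hsplit A hA
    have hsF : signMat * F * signMat = E := by
      rw [hF, mul_sub, sub_mul, hsw, mul_one, signMat_mul_self, hF, sub_sub_cancel]
    have : signMat * (s • E + t • F) * signMat = s • F + t • E := by
      simp only [mul_add, add_mul, mul_smul_comm, smul_mul_assoc, hsw, hsF]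
    rw [signMat_inv, this]
    simp only [map_add, map_smul, ha, hb, add_mul, mul_add,
      smul_mul_assoc, mul_smul_comm, hEE, hEF, hFE, hFF, smul_zero, add_zero, zero_add]
  · exact (hclash F a b ha hb).elim

/-! ### Pairs of maps of standard form -/

/-- The second map of a trace-preserving pair is determined by the first: if `φ₁ A` is `L A R` and
`tr (φ₁ A · Y) = tr (A Z)` for all `A`, then nondegeneracy of the trace form gives `R Y L = Z`. -/
lemma eq_of_trace_dual {n : ℕ} {L R Y Z : Matrix (Fin n) (Fin n) ℝ} (hL : IsUnit L) (hR : IsUnit R)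
    (hRYL : InSpanDS (R * Y * L)) (hZ : InSpanDS Z)
    (h : ∀ A, InSpanDS A → (L * A * R * Y).trace = (A * Z).trace) : Y = R⁻¹ * Z * L⁻¹ := by
  have key : R * Y * L - Z = 0 := by
    refine eq_zero_of_trace ?_ fun A hA => ?_
    · simpa [sub_eq_add_neg] using hRYL.add (hZ.smul (-1))
    · rw [sub_mul, trace_sub, trace_mul_comm Z, ← h A hA, sub_eq_zero, trace_mul_comm,
        ← mul_assoc, trace_mul_comm, ← mul_assoc, ← mul_assoc]
  have hLd : IsUnit L.det := (isUnit_iff_isUnit_det L).mp hL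
  have hRd : IsUnit R.det := (isUnit_iff_isUnit_det R).mp hR
  rw [← sub_eq_zero.mp key, mul_assoc, mul_assoc, mul_assoc, mul_nonsing_inv _ hLd, mul_one,
    ← mul_assoc, nonsing_inv_mul _ hRd, one_mul]

/-- The pairs of maps of the standard form: `(C P A P⁻¹, P A P⁻¹ C⁻¹)` for `n = 2`, and
`(P A Q⁻¹, Q A P⁻¹)` or `(P Aᵀ Q⁻¹, Q Aᵀ P⁻¹)` for `n ≥ 3`. -/
def IsStandardPair (n : ℕ) (φ₁ φ₂ : Matrix (Fin n) (Fin n) ℝ → Matrix (Fin n) (Fin n) ℝ) : Prop :=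
  (n = 2 ∧ ∃ C P : Matrix (Fin n) (Fin n) ℝ, InSpanDS C ∧ IsUnit C ∧
      (P = 1 ∨ P = Matrix.diagonal (fun i => if i.val = 0 then (1:ℝ) else -1)) ∧
      (∀ A, InSpanDS A → φ₁ A = C * (P * A * P⁻¹)) ∧
      (∀ A, InSpanDS A → φ₂ A = P * A * P⁻¹ * C⁻¹)) ∨
   (3 ≤ n ∧ ∃ P Q : Matrix (Fin n) (Fin n) ℝ, InSpanDS P ∧ InSpanDS Q ∧
      IsUnit P ∧ IsUnit Q ∧
      (((∀ A, InSpanDS A → φ₁ A = P * A * Q⁻¹) ∧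
        (∀ A, InSpanDS A → φ₂ A = Q * A * P⁻¹)) ∨
       ((∀ A, InSpanDS A → φ₁ A = P * Aᵀ * Q⁻¹) ∧
        (∀ A, InSpanDS A → φ₂ A = Q * Aᵀ * P⁻¹))))

/-- A trace-preserving pair whose first map does not increase rank one is of standard form: the
first map is given by the rank-one preserver results, the second by duality. -/
lemma isStandardPair_of_trace_rank {n : ℕ} (hn : 2 ≤ n)
    {φ₁ φ₂ : Matrix (Fin n) (Fin n) ℝ → Matrix (Fin n) (Fin n) ℝ}
    (hφ₁ : ∀ A, InSpanDS A → InSpanDS (φ₁ A)) (hφ₂ : ∀ A, InSpanDS A → InSpanDS (φ₂ A))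
    (htr : ∀ A B, InSpanDS A → InSpanDS B → (φ₁ A * φ₂ B).trace = (A * B).trace)
    (hrk : ∀ A, InSpanDS A → A.rank ≤ 1 → (φ₁ A).rank ≤ 1) : IsStandardPair n φ₁ φ₂ := by
  obtain ⟨Φ, hΦφ, hinj, hsurj⟩ := exists_linear_extension hφ₁ hφ₂ htr
  have hΦ : ∀ A, InSpanDS A → InSpanDS (Φ A) := fun A hA => hΦφ A hA ▸ hφ₁ A hA
  have hr : ∀ A, InSpanDS A → (∃ u v, A = vecMulVec u v) → ∃ u v, Φ A = vecMulVec u v := by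
    intro A hA hA'
    rw [← hΦφ A hA]
    refine exists_vecMulVec_of_rank_le_one (hrk A hA ?_)
    obtain ⟨u, v, rfl⟩ := hA'
    exact rank_vecMulVec_le u v
  -- surjectivity onto `1` makes the outer factors of `φ₁` invertible
  obtain ⟨A₁, hA₁, hone⟩ := hsurj 1 inSpanDS_one
  rw [hΦφ A₁ hA₁] at hone
  rcases hn.eq_or_lt with rfl | hn3
  · left
    refine ⟨rfl, ?_⟩
    obtain ⟨C, P, hC, hP, hCP⟩ := rankOne_preserver_two Φ hΦ hinj hr
    have hCu : IsUnit C := by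
      rw [hCP A₁ hA₁] at hone
      exact IsUnit.of_mul_eq_one _ hone
    have hPu : IsUnit P := by
      rcases hP with rfl | rfl
      exacts [isUnit_one, isUnit_signMat]
    have hPd : IsUnit P.det := (isUnit_iff_isUnit_det P).mp hPu
    refine ⟨C, P, hC, hCu, hP, fun A hA => by rw [hΦφ A hA, hCP A hA], fun B hB => ?_⟩
    have hconj : ∀ A, InSpanDS A → InSpanDS (P⁻¹ * A * P) := by
      intro A hA
      rcases hP with rfl | rfl
      · simpa using hA
      · rw [signMat_inv]; exact inSpanDS_signMat_conj hA
    have hPi : IsUnit P⁻¹ := isUnit_nonsing_inv_iff.mpr hPu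
    have := eq_of_trace_dual (L := C * P) (R := P⁻¹) (Y := φ₂ B) (Z := B) (hCu.mul hPu) hPi
      (by simpa only [mul_assoc] using hconj _ ((hφ₂ B hB).mul hC)) hB (fun A hA => by
        rw [← htr A B hA hB, hΦφ A hA, hCP A hA]; simp only [mul_assoc])
    rw [this, nonsing_inv_nonsing_inv _ hPd, Matrix.mul_inv_rev, ← mul_assoc]
  · right
    refine ⟨hn3, ?_⟩
    obtain ⟨m, rfl⟩ : ∃ m, n = m + 1 := ⟨n - 1, by omega⟩
    obtain ⟨L, R, hL, hR, hLR⟩ := rankOne_preserver_spanDS (by omega) Φ hΦ hinj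
      (by
        obtain ⟨A, hA, h⟩ := hsurj _ inSpanDS_avgMat
        exact ⟨A, hA, by rw [← hΦφ A hA, h]⟩) hr
    have hu : IsUnit L ∧ IsUnit R := by
      rcases hLR with h | h <;> rw [h A₁ hA₁] at hone
      · exact ⟨IsUnit.of_mul_eq_one _ (by rw [← mul_assoc]; exact hone),
          IsUnit.of_mul_eq_one_right _ hone⟩
      · exact ⟨IsUnit.of_mul_eq_one _ (by rw [← mul_assoc]; exact hone),
          IsUnit.of_mul_eq_one_right _ hone⟩
    obtain ⟨hLu, hRu⟩ := hu
    have hRd : IsUnit R.det := (isUnit_iff_isUnit_det R).mp hRu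
    refine ⟨L, R⁻¹, hL, hR.inv hRu, hLu, isUnit_nonsing_inv_iff.mpr hRu, ?_⟩
    rw [nonsing_inv_nonsing_inv _ hRd]
    rcases hLR with h | h
    · left
      refine ⟨fun A hA => by rw [hΦφ A hA, h A hA], fun B hB => ?_⟩
      refine eq_of_trace_dual hLu hRu ((hR.mul (hφ₂ B hB)).mul hL) hB fun A hA => ?_
      rw [← htr A B hA hB, hΦφ A hA, h A hA]
    · right
      refine ⟨fun A hA => by rw [hΦφ A hA, h A hA], fun B hB => ?_⟩
      refine eq_of_trace_dual hLu hRu ((hR.mul (hφ₂ B hB)).mul hL) hB.transpose fun A hA => ?_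
      have := htr Aᵀ B hA.transpose hB
      rw [hΦφ _ hA.transpose, h _ hA.transpose, transpose_transpose] at this
      rw [this, ← trace_transpose, transpose_mul, transpose_transpose, trace_mul_comm]

lemma charpoly_conj {n : ℕ} {P : Matrix (Fin n) (Fin n) ℝ} (hP : IsUnit P)
    (M : Matrix (Fin n) (Fin n) ℝ) : (P * M * P⁻¹).charpoly = M.charpoly := by
  rw [charpoly_mul_comm, ← mul_assoc,
    nonsing_inv_mul _ ((isUnit_iff_isUnit_det P).mp hP), one_mul]

lemma IsStandardPair.charpoly_eq {n : ℕ}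
    {φ₁ φ₂ : Matrix (Fin n) (Fin n) ℝ → Matrix (Fin n) (Fin n) ℝ} (h : IsStandardPair n φ₁ φ₂)
    (A B : Matrix (Fin n) (Fin n) ℝ) (hA : InSpanDS A) (hB : InSpanDS B) :
    (φ₁ A * φ₂ B).charpoly = (A * B).charpoly := by
  rcases h with ⟨rfl, C, P, -, hC, hP, h1, h2⟩ | ⟨-, P, Q, -, -, hP, hQ, ⟨h1, h2⟩ | ⟨h1, h2⟩⟩
  · have hPu : IsUnit P := by
      rcases hP with rfl | rfl
      exacts [isUnit_one, isUnit_signMat]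
    have hPd : IsUnit P.det := (isUnit_iff_isUnit_det P).mp hPu
    rw [h1 A hA, h2 B hB, ← charpoly_conj (hC.mul hPu) (A * B), Matrix.mul_inv_rev]
    congr 1
    calc C * (P * A * P⁻¹) * (P * B * P⁻¹ * C⁻¹) = C * P * A * (P⁻¹ * P) * B * P⁻¹ * C⁻¹ := by
          simp only [mul_assoc]
      _ = _ := by rw [nonsing_inv_mul _ hPd, mul_one]; simp only [mul_assoc]
  · have hQd : IsUnit Q.det := (isUnit_iff_isUnit_det Q).mp hQ
    rw [h1 A hA, h2 B hB, ← charpoly_conj hP (A * B)]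
    congr 1
    calc P * A * Q⁻¹ * (Q * B * P⁻¹) = P * A * (Q⁻¹ * Q) * B * P⁻¹ := by simp only [mul_assoc]
      _ = _ := by rw [nonsing_inv_mul _ hQd, mul_one]; simp only [mul_assoc]
  · have hQd : IsUnit Q.det := (isUnit_iff_isUnit_det Q).mp hQ
    rw [h1 A hA, h2 B hB, charpoly_mul_comm A B, ← charpoly_transpose (B * A), transpose_mul,
      ← charpoly_conj hP (Aᵀ * Bᵀ)]
    congr 1
    calc P * Aᵀ * Q⁻¹ * (Q * Bᵀ * P⁻¹) = P * Aᵀ * (Q⁻¹ * Q) * Bᵀ * P⁻¹ := by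
          simp only [mul_assoc]
      _ = _ := by rw [nonsing_inv_mul _ hQd, mul_one]; simp only [mul_assoc]

theorem stmt15 (n : ℕ) (hn : 2 ≤ n)
    (φ₁ φ₂ : Matrix (Fin n) (Fin n) ℝ → Matrix (Fin n) (Fin n) ℝ)
    (hφ₁ : ∀ A, InSpanDS A → InSpanDS (φ₁ A)) (hφ₂ : ∀ A, InSpanDS A → InSpanDS (φ₂ A)) :
    (((∀ A B, InSpanDS A → InSpanDS B → (φ₁ A * φ₂ B).trace = (A * B).trace) ∧
        ((∀ A, InSpanDS A → A.rank ≤ 1 → (φ₁ A).rank ≤ 1) ∨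
         (∀ A, InSpanDS A → A.rank ≤ 1 → (φ₂ A).rank ≤ 1))) ↔
      (∀ A B, InSpanDS A → InSpanDS B → (φ₁ A * φ₂ B).charpoly = (A * B).charpoly)) ∧
    ((∀ A B, InSpanDS A → InSpanDS B → (φ₁ A * φ₂ B).charpoly = (A * B).charpoly) ↔
      ((n = 2 ∧ ∃ C P : Matrix (Fin n) (Fin n) ℝ, InSpanDS C ∧ IsUnit C ∧
          (P = 1 ∨ P = Matrix.diagonal (fun i => if i.val = 0 then (1:ℝ) else -1)) ∧
          (∀ A, InSpanDS A → φ₁ A = C * (P * A * P⁻¹)) ∧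
          (∀ A, InSpanDS A → φ₂ A = P * A * P⁻¹ * C⁻¹)) ∨
       (3 ≤ n ∧ ∃ P Q : Matrix (Fin n) (Fin n) ℝ, InSpanDS P ∧ InSpanDS Q ∧
          IsUnit P ∧ IsUnit Q ∧
          (((∀ A, InSpanDS A → φ₁ A = P * A * Q⁻¹) ∧
            (∀ A, InSpanDS A → φ₂ A = Q * A * P⁻¹)) ∨
           ((∀ A, InSpanDS A → φ₁ A = P * Aᵀ * Q⁻¹) ∧
            (∀ A, InSpanDS A → φ₂ A = Q * Aᵀ * P⁻¹)))))) := by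
  have h21 := trace_rank_of_charpoly (by omega) hφ₁ hφ₂
  have h12 : ((∀ A B, InSpanDS A → InSpanDS B → (φ₁ A * φ₂ B).trace = (A * B).trace) ∧
        ((∀ A, InSpanDS A → A.rank ≤ 1 → (φ₁ A).rank ≤ 1) ∨
         (∀ A, InSpanDS A → A.rank ≤ 1 → (φ₂ A).rank ≤ 1))) →
      ∀ A B, InSpanDS A → InSpanDS B → (φ₁ A * φ₂ B).charpoly = (A * B).charpoly := by
    rintro ⟨htr, hr | hr⟩ A B hA hB
    · exact (isStandardPair_of_trace_rank hn hφ₁ hφ₂ htr hr).charpoly_eq A B hA hB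
    · -- equality of the characteristic polynomials is symmetric in the two maps
      have := isStandardPair_of_trace_rank hn hφ₂ hφ₁
        (fun A B hA hB => by rw [trace_mul_comm, htr B A hB hA, trace_mul_comm]) hr
      rw [charpoly_mul_comm, this.charpoly_eq B A hB hA, charpoly_mul_comm]
  refine ⟨⟨h12, fun h => ⟨(h21 h).1, Or.inl (h21 h).2⟩⟩, fun h => ?_, fun h => ?_⟩
  · exact isStandardPair_of_trace_rank hn hφ₁ hφ₂ (h21 h).1 (h21 h).2
  · exact IsStandardPair.charpoly_eq h
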